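/- arXiv:1910.01371 — 2 statements merged into one kernel-verified Lean document; each statement's English description precedes it below -/
import Mathlib

section
/- Let d ≥ 3 be an integer. There exists a constant C > 0 such that for all μ ≥ 2, | Σ_{0 ≤ l ≤ μ−(d−2)/2} (m_l^d − m_{l−1}^d) · ∫_{l+(d−3)/2}^{μ} μ·g(t/μ) dt − 2^{−d} Γ(d/2+1)^{−2} μ^d | ≤ C μ^{d−2}, where the sum is over integers l. -/
open Real MeasureTheory Set

/-- The Bessel function of the first kind of order `ν ≥ 0`, for `x > 0`, via the
integral representation. -/
noncomputable def besselJ (ν x : ℝ) : ℝ :=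
  (1 / π) * (∫ θ in (0:ℝ)..π, Real.cos (x * Real.sin θ - ν * θ)) -
    (Real.sin (ν * π) / π) * ∫ t in Set.Ioi (0:ℝ), Real.exp (-x * Real.sinh t - ν * t)

/-- The function `g(t) = (√(1-t²) - t arccos t)/π`. -/
noncomputable def gfun (t : ℝ) : ℝ := (Real.sqrt (1 - t ^ 2) - t * Real.arccos t) / π

/-- The multiplicity `m_n^d = C(n+d-1, d-1) - C(n+d-3, d-1)`. -/
def multB (d n : ℕ) : ℕ := Nat.choose (n + d - 1) (d - 1) - Nat.choose (n + d - 3) (d - 1)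

/-- The difference `m_l^d - m_{l-1}^d` (with `m_{-1}^d = 0`). -/
def multBdiff (d l : ℕ) : ℤ := (multB d l : ℤ) - if l = 0 then 0 else (multB d (l - 1) : ℤ)
lemma multBdiff_mul (m l : ℕ) :
    (multBdiff (m + 4) l : ℝ) * ((m + 1).factorial : ℝ)
      = (2 * l + m + 1) * ∏ j ∈ Finset.range m, ((l : ℝ) + 1 + j) := by
  have h1 : multBdiff (m + 4) l = ((l + m + 1).choose (m + 1) : ℤ) + ((l + m).choose (m + 1) : ℤ) := by
    have hB : ∀ l, multB (m + 4) l = (l + m + 2).choose (m + 2) + (l + m + 1).choose (m + 2) := by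
      intro l
      unfold multB
      rw [show l + (m + 4) - 1 = (l + m + 1) + 1 + 1 by omega, show m + 4 - 1 = m + 2 + 1 by omega,
        show l + (m + 4) - 3 = l + m + 1 by omega, Nat.choose_succ_succ, Nat.choose_succ_succ (l + m + 1) (m + 2)]
      simp only [Nat.succ_eq_add_one]
      omega
    unfold multBdiff
    rcases l with _ | l
    · rw [hB]; simp
    · rw [hB, if_neg (by omega), hB]
      have e1 := Nat.choose_succ_succ (l + 1 + m + 1) (m + 1)
      have e2 := Nat.choose_succ_succ (l + 1 + m) (m + 1)
      simp only [Nat.succ_eq_add_one, Nat.add_sub_cancel] at *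
      rw [show l + 1 + m + 2 = l + 1 + m + 1 + 1 by omega, show l + m + 2 = l + 1 + m + 1 by omega,
        show l + m + 1 = l + 1 + m by omega, e1]
      rw [show m + 2 = m + 1 + 1 by omega, e2]
      push_cast
      ring
  have h2 : (∏ j ∈ Finset.range m, ((l : ℝ) + 1 + j)) = ((l + 1).ascFactorial m : ℕ) := by
    rw [Nat.ascFactorial_eq_prod_range]; push_cast; rfl
  have h3 : (m + 1).factorial * (l + m + 1).choose (m + 1) = (l + m + 1) * (l + 1).ascFactorial m := by
    have := Nat.ascFactorial_eq_factorial_mul_choose l (m + 1)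
    rw [show l + m + 1 = l + (m + 1) by ring, ← this, Nat.ascFactorial_succ]; ring
  have h4 : (m + 1).factorial * (l + m).choose (m + 1) = l * (l + 1).ascFactorial m := by
    rcases l with _ | l
    · simp
    · have := Nat.ascFactorial_eq_factorial_mul_choose l (m + 1)
      rw [show l + 1 + m = l + (m + 1) by ring, ← this]
      have h5 := Nat.succ_ascFactorial (l + 1) m
      rw [Nat.ascFactorial_succ]
      simp only [Nat.succ_eq_add_one] at h5
      rw [h5]
  have h3' : ((m + 1).factorial : ℝ) * (l + m + 1).choose (m + 1) = (l + m + 1) * (l + 1).ascFactorial m := by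
    exact_mod_cast h3
  have h4' : ((m + 1).factorial : ℝ) * (l + m).choose (m + 1) = l * (l + 1).ascFactorial m := by
    exact_mod_cast h4
  rw [h1, h2]; push_cast
  linear_combination h3' + h4'

lemma weier (m : ℕ) (f : ℕ → ℝ) (h0 : ∀ j, j < m → 0 ≤ f j) (h1 : ∀ j, j < m → f j ≤ 1) :
    1 - ∑ j ∈ Finset.range m, f j ≤ ∏ j ∈ Finset.range m, (1 - f j)
    ∧ ∏ j ∈ Finset.range m, (1 - f j) ≤ 1 ∧ 0 ≤ ∏ j ∈ Finset.range m, (1 - f j) := by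
  induction m with
  | zero => simp
  | succ m ih =>
    obtain ⟨a, b, c⟩ := ih (fun j hj => h0 j (by omega)) (fun j hj => h1 j (by omega))
    have := h0 m (by omega)
    have := h1 m (by omega)
    rw [Finset.sum_range_succ, Finset.prod_range_succ]
    refine ⟨?_, ?_, ?_⟩ <;> nlinarith

/-- the constant in the multiplicity estimate -/
noncomputable def Dc (m : ℕ) : ℝ := ∑ j ∈ Finset.range m, (((m : ℝ) - 1) / 2 - j) ^ 2

lemma mult_bound (m l : ℕ) (s : ℝ) (hs : s = l + ((m : ℝ) + 1) / 2) :
    |(multBdiff (m + 4) l : ℝ) - 2 / (m + 1).factorial * s ^ (m + 1)|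
      ≤ 2 / (m + 1).factorial * (s ^ (m + 1) * (Dc m / s ^ 2)) := by
  have hs0 : 0 < s := by rw [hs]; positivity
  set P := ∏ j ∈ Finset.range m, ((l : ℝ) + 1 + j) with hP
  have hP0 : 0 ≤ P := Finset.prod_nonneg (fun j _ => by positivity)
  have hPsq : P ^ 2 = ∏ j ∈ Finset.range m, (s ^ 2 * (1 - (((m : ℝ) - 1) / 2 - j) ^ 2 / s ^ 2)) := by
    rw [sq]
    nth_rewrite 2 [hP]
    rw [← Finset.prod_range_reflect, hP, ← Finset.prod_mul_distrib]
    refine Finset.prod_congr rfl fun j hj => ?_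
    have hj := Finset.mem_range.1 hj
    rw [Nat.sub_sub, Nat.cast_sub (by omega)]
    field_simp
    rw [hs]; push_cast; ring
  have hw := weier m (fun j => (((m : ℝ) - 1) / 2 - j) ^ 2 / s ^ 2) (fun j hj => by positivity)
    (fun j hj => by
      rw [div_le_one (by positivity)]
      have : (j : ℝ) + 1 ≤ m := by exact_mod_cast hj
      have : (0 : ℝ) ≤ j := by positivity
      have : (0 : ℝ) ≤ l := by positivity
      apply sq_le_sq'
      · rw [hs]; linarith
      · rw [hs]; linarith)
  rw [← Finset.sum_div] at hw
  change 1 - Dc m / s ^ 2 ≤ _ ∧ _ at hw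
  rw [Finset.prod_mul_distrib, Finset.prod_const, Finset.card_range] at hPsq
  set W := ∏ j ∈ Finset.range m, (1 - (((m : ℝ) - 1) / 2 - j) ^ 2 / s ^ 2) with hW
  obtain ⟨w1, w2, w3⟩ := hw
  set r := P / s ^ m with hr
  have hPr : P = r * s ^ m := by rw [hr]; field_simp
  have hr0 : 0 ≤ r := by positivity
  have hrW : r ^ 2 = W := by
    rw [hr, div_pow, hPsq]; field_simp; ring
  have hr1 : r ≤ 1 := by nlinarith
  have hr2 : 1 - Dc m / s ^ 2 ≤ r := by nlinarith
  have hm : (multBdiff (m + 4) l : ℝ) = 2 / (m + 1).factorial * s ^ (m + 1) * r := by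
    have := multBdiff_mul m l
    have hf : ((m + 1).factorial : ℝ) ≠ 0 := by positivity
    rw [← hP, hPr] at this
    field_simp
    rw [this, hs]; ring
  rw [hm]
  have hc : 0 ≤ 2 / ((m + 1).factorial : ℝ) * s ^ (m + 1) := by positivity
  rw [abs_le]
  constructor <;> nlinarith

lemma mult_bound' (m l : ℕ) (s μ : ℝ) (hs : s = l + ((m : ℝ) + 1) / 2) (hsμ : s ≤ μ) :
    |(multBdiff (m + 4) l : ℝ) - 2 / (m + 1).factorial * s ^ (m + 1)| * μ ^ 2
      ≤ 2 / (m + 1).factorial * Dc m * μ ^ (m + 1) := by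
  have hs0 : 0 < s := by rw [hs]; positivity
  have h := mult_bound m l s hs
  rcases m with _ | m
  · simp [Dc] at h ⊢
    rw [h]; simp
  · have hD : 0 ≤ Dc (m + 1) := Finset.sum_nonneg fun j _ => sq_nonneg _
    have h2 : s ^ (m + 1 + 1) * (Dc (m + 1) / s ^ 2) = s ^ m * Dc (m + 1) := by field_simp; ring
    rw [h2] at h
    have h3 : s ^ m ≤ μ ^ m := by gcongr
    calc _ ≤ 2 / ((m + 1 + 1).factorial : ℝ) * (s ^ m * Dc (m + 1)) * μ ^ 2 := by gcongr
      _ ≤ 2 / ((m + 1 + 1).factorial : ℝ) * (μ ^ m * Dc (m + 1)) * μ ^ 2 := by gcongr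
      _ = _ := by ring

lemma mult_zero (l : ℕ) : (multBdiff 3 l : ℝ) = if l = 0 then 1 else 2 := by
  rcases l with _ | l
  · simp [multBdiff, multB]
  · have hB : ∀ l, multB 3 l = 2 * l + 1 := by
      intro l
      unfold multB
      have e1 := Nat.choose_succ_succ (l + 1) 1
      have e2 := Nat.choose_succ_succ l 1
      simp only [Nat.succ_eq_add_one, Nat.choose_one_right, Nat.reduceAdd, Nat.reduceSub,
        Nat.add_sub_cancel] at *
      rw [show l + 3 - 1 = l + 1 + 1 by omega]
      omega
    unfold multBdiff
    rw [hB, if_neg (by omega), hB]; simp; ring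

lemma gfun_cont : Continuous gfun := by
  unfold gfun
  have := Real.continuous_arccos
  fun_prop

lemma gfun_one : gfun 1 = 0 := by simp [gfun]

lemma gfun_deriv {x : ℝ} (h1 : -1 < x) (h2 : x < 1) :
    HasDerivAt gfun (-(Real.arccos x / π)) x := by
  have hp : 0 < 1 - x ^ 2 := by nlinarith
  have ha := Real.hasDerivAt_arccos h1.ne' h2.ne
  have hs : HasDerivAt (fun x : ℝ => √(1 - x ^ 2)) _ x :=
    (((hasDerivAt_id x).pow 2).const_sub 1).sqrt hp.ne'
  have := (hs.sub ((hasDerivAt_id x).mul ha)).div_const π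
  refine this.congr_deriv ?_
  have hq : √(1 - x ^ 2) ≠ 0 := (Real.sqrt_pos.2 hp).ne'
  simp
  field_simp
  ring

lemma arccos_div_bound (x : ℝ) : 0 ≤ Real.arccos x / π ∧ Real.arccos x / π ≤ 1 :=
  ⟨div_nonneg (Real.arccos_nonneg x) pi_pos.le, (div_le_one pi_pos).2 (Real.arccos_le_pi x)⟩

lemma gfun_bound {x : ℝ} (h0 : 0 ≤ x) (h1 : x ≤ 1) : 0 ≤ gfun x ∧ gfun x ≤ 1 - x := by
  have hc : Continuous fun y : ℝ => Real.arccos y / π := Real.continuous_arccos.div_const _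
  have h : ∫ y in x..1, -(Real.arccos y / π) = gfun 1 - gfun x :=
    intervalIntegral.integral_eq_sub_of_hasDerivAt_of_le h1 gfun_cont.continuousOn
      (fun y hy => gfun_deriv (by linarith [hy.1]) hy.2) (hc.neg.intervalIntegrable _ _)
  rw [intervalIntegral.integral_neg, gfun_one] at h
  have hn : 0 ≤ ∫ y in x..1, Real.arccos y / π :=
    intervalIntegral.integral_nonneg h1 fun y _ => (arccos_div_bound y).1
  have hb : ∫ y in x..1, Real.arccos y / π ≤ ∫ y in x..1, (1:ℝ) :=
    intervalIntegral.integral_mono_on h1 (hc.intervalIntegrable _ _) (by simp)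
      fun y _ => (arccos_div_bound y).2
  rw [intervalIntegral.integral_const, smul_eq_mul, mul_one] at hb
  constructor <;> linarith

/-- the area function -/
noncomputable def Gf (μ s : ℝ) : ℝ := ∫ t in s..μ, μ * gfun (t / μ)

lemma gm_cont (μ : ℝ) : Continuous fun t => μ * gfun (t / μ) := by
  have := gfun_cont
  fun_prop

lemma Gf_deriv (μ s : ℝ) : HasDerivAt (Gf μ) (-(μ * gfun (s / μ))) s :=
  intervalIntegral.integral_hasDerivAt_left ((gm_cont μ).intervalIntegrable _ _)
    ((gm_cont μ).stronglyMeasurableAtFilter _ _) (gm_cont μ).continuousAt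

lemma Gf_cont (μ : ℝ) : Continuous (Gf μ) :=
  continuous_iff_continuousAt.2 fun s => (Gf_deriv μ s).continuousAt

lemma gm_bound {μ s : ℝ} (hμ : 0 < μ) (h0 : 0 ≤ s) (h1 : s ≤ μ) :
    |μ * gfun (s / μ)| ≤ μ - s := by
  have := gfun_bound (x := s / μ) (by positivity) ((div_le_one hμ).2 h1)
  rw [abs_of_nonneg (mul_nonneg hμ.le this.1)]
  calc _ ≤ μ * (1 - s / μ) := by gcongr; exact this.2
    _ = _ := by field_simp

lemma Gf_bound {μ s : ℝ} (hμ : 0 < μ) (h0 : 0 ≤ s) (h1 : s ≤ μ) : |Gf μ s| ≤ (μ - s) ^ 2 := by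
  have := intervalIntegral.norm_integral_le_of_norm_le_const (a := s) (b := μ) (C := μ - s)
    (f := fun t => μ * gfun (t / μ)) (fun x hx => by
      rw [uIoc_of_le h1] at hx
      have := gm_bound hμ (h0.trans hx.1.le) hx.2
      rw [Real.norm_eq_abs]
      linarith [hx.1])
  rw [abs_of_nonneg (by linarith), ← sq] at this
  exact this

lemma Gf_bound' {μ s : ℝ} (hμ : 0 < μ) (h0 : 0 ≤ s) (h1 : s ≤ μ) : |Gf μ s| ≤ μ ^ 2 :=
  (Gf_bound hμ h0 h1).trans (by nlinarith)

/-- second derivative bound for `s^k G(s)` -/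
lemma F_derivs (k : ℕ) {μ : ℝ} (hμ : 0 < μ) : ∃ F1 F2 : ℝ → ℝ, Continuous F2 ∧
    (∀ s, HasDerivAt (fun s => s ^ k * Gf μ s) (F1 s) s) ∧
    (∀ s, 0 ≤ s → s < μ → HasDerivAt F1 (F2 s) s) ∧
    (∀ s, 0 ≤ s → s < μ → |F2 s| ≤ ((k : ℝ) ^ 2 + 2 * k + 1) * μ ^ k) := by
  refine ⟨fun s => (k : ℝ) * s ^ (k - 1) * Gf μ s + s ^ k * -(μ * gfun (s / μ)),
    fun s => ((k : ℝ) * (((k - 1 : ℕ) : ℝ) * s ^ (k - 1 - 1)) * Gf μ s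
        + (k : ℝ) * s ^ (k - 1) * -(μ * gfun (s / μ))) +
      ((k : ℝ) * s ^ (k - 1) * -(μ * gfun (s / μ)) + s ^ k * (Real.arccos (s / μ) / π)),
      ?_, ?_, ?_, ?_⟩
  · have := Gf_cont μ
    have := gfun_cont
    have := Real.continuous_arccos
    fun_prop
  · intro s
    exact (hasDerivAt_pow k s).mul (Gf_deriv μ s)
  · intro s h0 h1
    have hg : HasDerivAt (fun s => -(μ * gfun (s / μ))) (Real.arccos (s / μ) / π) s := by
      have hg0 := gfun_deriv (x := s / μ) (by have : 0 ≤ s / μ := by positivity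
                                              linarith) ((div_lt_one hμ).2 h1)
      have := ((HasDerivAt.comp s hg0 ((hasDerivAt_id s).div_const μ)).const_mul μ).neg
      refine this.congr_deriv ?_
      field_simp
    exact (((hasDerivAt_pow (k - 1) s).const_mul (k : ℝ)).mul (Gf_deriv μ s)).add
      ((hasDerivAt_pow k s).mul hg)
  · intro s h0 h1
    have hG := Gf_bound' hμ h0 h1.le
    have hg : |μ * gfun (s / μ)| ≤ μ := (gm_bound hμ h0 h1.le).trans (by linarith)
    have ha := arccos_div_bound (s / μ)
    have t1 : |(k : ℝ) * (((k - 1 : ℕ) : ℝ) * s ^ (k - 1 - 1)) * Gf μ s| ≤ (k : ℝ) ^ 2 * μ ^ k := by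
      rcases k with _ | _ | k
      · simp
      · simp; positivity
      · simp only [Nat.add_sub_cancel]
        rw [abs_mul, abs_of_nonneg (by positivity)]
        calc _ ≤ ((k + 1 + 1 : ℕ) : ℝ) * (((k + 1 : ℕ) : ℝ) * μ ^ k) * μ ^ 2 := by gcongr
          _ = ((k + 1 + 1 : ℕ) : ℝ) * ((k + 1 : ℕ) : ℝ) * μ ^ (k + 1 + 1) := by ring
          _ ≤ _ := by
            rw [sq]
            gcongr
            omega
    have t2 : |(k : ℝ) * s ^ (k - 1) * -(μ * gfun (s / μ))| ≤ k * μ ^ k := by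
      rcases k with _ | k
      · simp
      · simp only [Nat.add_sub_cancel]
        rw [abs_mul, abs_neg, abs_of_nonneg (a := ((k + 1 : ℕ) : ℝ) * s ^ k) (by positivity)]
        calc _ ≤ ((k + 1 : ℕ) : ℝ) * μ ^ k * μ := by gcongr
          _ = _ := by ring
    have t3 : |s ^ k * (Real.arccos (s / μ) / π)| ≤ μ ^ k := by
      rw [abs_of_nonneg (mul_nonneg (by positivity) ha.1)]
      calc _ ≤ μ ^ k * 1 := mul_le_mul (by gcongr) ha.2 ha.1 (by positivity)
        _ = _ := by ring
    refine (abs_add_le _ _).trans ?_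
    have a1 := abs_add_le ((k : ℝ) * (((k - 1 : ℕ) : ℝ) * s ^ (k - 1 - 1)) * Gf μ s)
      ((k : ℝ) * s ^ (k - 1) * -(μ * gfun (s / μ)))
    have a2 := abs_add_le ((k : ℝ) * s ^ (k - 1) * -(μ * gfun (s / μ)))
      (s ^ k * (Real.arccos (s / μ) / π))
    linarith

lemma trap_one {F F1 F2 : ℝ → ℝ} {a M : ℝ} (hF2 : Continuous F2)
    (h1 : ∀ s, HasDerivAt F (F1 s) s)
    (h2 : ∀ s ∈ Icc a (a + 1), HasDerivAt F1 (F2 s) s)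
    (hM : ∀ s ∈ Icc a (a + 1), |F2 s| ≤ M) :
    |(F a + F (a + 1)) / 2 - ∫ x in a..(a + 1), F x| ≤ M := by
  have hFc : Continuous F := continuous_iff_continuousAt.2 fun s => (h1 s).continuousAt
  have hab : a ≤ a + 1 := by linarith
  have key : ∫ x in a..(a + 1), ((x - a) * (x - a - 1) / 2 * F2 x - F x) =
      ((a + 1 - a) * (a + 1 - a - 1) / 2 * F1 (a + 1) - (a + 1 - a - 1 / 2) * F (a + 1))
      - ((a - a) * (a - a - 1) / 2 * F1 a - (a - a - 1 / 2) * F a) := by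
    refine intervalIntegral.integral_eq_sub_of_hasDerivAt
      (f := fun x => (x - a) * (x - a - 1) / 2 * F1 x - (x - a - 1 / 2) * F x) ?_ ?_
    · intro x hx
      rw [uIcc_of_le hab] at hx
      have e1 : HasDerivAt (fun x : ℝ => x - a) 1 x := (hasDerivAt_id x).sub_const a
      have := ((((e1.mul (e1.sub_const 1)).div_const 2).mul (h2 x hx)).sub
        ((e1.sub_const (1 / 2)).mul (h1 x)))
      refine this.congr_deriv ?_
      simp
      ring
    · apply Continuous.intervalIntegrable
      fun_prop
  rw [intervalIntegral.integral_sub (by apply Continuous.intervalIntegrable; fun_prop)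
    (hFc.intervalIntegrable _ _)] at key
  have hb := intervalIntegral.norm_integral_le_of_norm_le_const (a := a) (b := a + 1) (C := M)
    (f := fun x => (x - a) * (x - a - 1) / 2 * F2 x) (fun x hx => by
      rw [uIoc_of_le hab] at hx
      have hm := hM x ⟨hx.1.le, hx.2⟩
      rw [Real.norm_eq_abs, abs_mul]
      have : |(x - a) * (x - a - 1) / 2| ≤ 1 := by
        rw [abs_le]; constructor <;> nlinarith [hx.1, hx.2]
      calc _ ≤ 1 * M := by gcongr
        _ = M := one_mul M)
  simp only [add_sub_cancel_left, abs_one, mul_one, Real.norm_eq_abs] at hb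
  refine le_trans (le_of_eq ?_) hb
  rw [← abs_neg]
  congr 1
  linarith

lemma trap_sum {F F1 F2 : ℝ → ℝ} {a b M : ℝ} (hF2 : Continuous F2)
    (h1 : ∀ s, HasDerivAt F (F1 s) s)
    (h2 : ∀ s, a ≤ s → s < b → HasDerivAt F1 (F2 s) s)
    (hM : ∀ s, a ≤ s → s < b → |F2 s| ≤ M) (N : ℕ) (hN : a + N < b) :
    |(∑ l ∈ Finset.range (N + 1), F (a + l)) - F a / 2 - F (a + N) / 2 - ∫ x in a..(a + N), F x|
      ≤ N * M := by
  have hFc : Continuous F := continuous_iff_continuousAt.2 fun s => (h1 s).continuousAt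
  induction N with
  | zero => simp; ring
  | succ N ih =>
    push_cast at hN ⊢
    have ih := ih (by linarith)
    have hN0 : (0 : ℝ) ≤ N := by positivity
    have t := trap_one (a := a + N) hF2 h1 (fun s hs => h2 s (by linarith [hs.1]) (by linarith [hs.2]))
      (fun s hs => hM s (by linarith [hs.1]) (by linarith [hs.2]))
    rw [add_assoc] at t
    rw [Finset.sum_range_succ]
    have hi := intervalIntegral.integral_add_adjacent_intervals
      (hFc.intervalIntegrable a (a + N) (μ := volume)) (hFc.intervalIntegrable (a + N) (a + (N + 1)))
    rw [← hi]
    push_cast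
    rw [abs_le] at *
    constructor <;> linarith [t.1, t.2, ih.1, ih.2]

lemma Vn (n : ℕ) : ∫ x in (0:ℝ)..(π / 2), Real.cos x ^ n
    = π * n.factorial / (2 ^ (n + 1) * Real.Gamma ((n : ℝ) / 2 + 1) ^ 2) := by
  induction n using Nat.twoStepInduction with
  | zero => simp
  | one =>
    have : Real.Gamma ((1 : ℝ) / 2 + 1) = 1 / 2 * √π := by
      rw [Real.Gamma_add_one (by norm_num), Real.Gamma_one_half_eq]
    simp only [pow_one, integral_cos, Nat.cast_one, this, mul_pow, Real.sq_sqrt pi_pos.le]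
    simp
  | more n ih _ =>
    rw [integral_cos_pow, ih]
    have : Real.Gamma (((n + 2 : ℕ) : ℝ) / 2 + 1) = ((n : ℝ) / 2 + 1) * Real.Gamma ((n : ℝ) / 2 + 1) := by
      rw [← Real.Gamma_add_one (by positivity)]
      congr 1; push_cast; ring
    have hG : Real.Gamma ((n : ℝ) / 2 + 1) ≠ 0 := (Real.Gamma_pos_of_pos (by positivity)).ne'
    rw [this, Nat.factorial_succ, Nat.factorial_succ]
    simp
    field_simp
    push_cast
    ring

lemma int_arccos (k : ℕ) : ∫ x in (0:ℝ)..1, x ^ k * Real.arccos x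
    = 1 / (k + 1) * ∫ x in (0:ℝ)..(π / 2), Real.cos x ^ (k + 1) := by
  have hπ : (0:ℝ) ≤ π / 2 := by positivity
  have h1 := intervalIntegral.integral_comp_mul_deriv (a := π / 2) (b := 0) (f := Real.cos)
    (f' := fun x => - Real.sin x) (g := fun x => x ^ k * Real.arccos x)
    (fun x _ => Real.hasDerivAt_cos x) (by fun_prop) (by have := Real.continuous_arccos; fun_prop)
  rw [Real.cos_pi_div_two, Real.cos_zero] at h1
  rw [← h1, intervalIntegral.integral_symm]
  have h2 : ∫ x in (0:ℝ)..(π / 2), ((fun x => x ^ k * Real.arccos x) ∘ Real.cos) x * -Real.sin x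
      = ∫ x in (0:ℝ)..(π / 2), -(x * Real.cos x ^ k * Real.sin x) := by
    apply intervalIntegral.integral_congr
    intro x hx
    rw [uIcc_of_le hπ] at hx
    simp only [Function.comp]
    rw [Real.arccos_cos hx.1 (by linarith [hx.2, pi_pos])]
    ring
  rw [h2, intervalIntegral.integral_neg, neg_neg]
  have h3 : ∫ x in (0:ℝ)..(π / 2), (x * Real.cos x ^ k * Real.sin x - 1 / (k + 1) * Real.cos x ^ (k + 1))
      = - (π / 2) * Real.cos (π / 2) ^ (k + 1) / (k + 1) - (- 0) * Real.cos 0 ^ (k + 1) / (k + 1) := by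
    refine intervalIntegral.integral_eq_sub_of_hasDerivAt
      (f := fun x => (-x) * Real.cos x ^ (k + 1) / (k + 1)) ?_ ?_
    · intro x _
      have := (((hasDerivAt_id x).neg).mul ((Real.hasDerivAt_cos x).pow (k + 1))).div_const ((k : ℝ) + 1)
      refine this.congr_deriv ?_
      simp
      field_simp
      ring
    · apply Continuous.intervalIntegrable
      fun_prop
  rw [intervalIntegral.integral_sub (by apply Continuous.intervalIntegrable; fun_prop)
    (by apply Continuous.intervalIntegrable; fun_prop), intervalIntegral.integral_const_mul] at h3
  simp at h3
  simp
  linarith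

lemma main_int (k : ℕ) {μ : ℝ} (hμ : 0 < μ) :
    ∫ s in (0:ℝ)..μ, 2 / (k.factorial : ℝ) * (s ^ k * Gf μ s)
      = μ ^ (k + 3) / (2 ^ (k + 3) * Real.Gamma (((k + 3 : ℕ) : ℝ) / 2 + 1) ^ 2) := by
  have hGc := Gf_cont μ
  have hgc := gfun_cont
  have hac := Real.continuous_arccos
  have s1 : ∫ s in (0:ℝ)..μ, (s ^ k * Gf μ s + s ^ (k + 1) / (k + 1) * -(μ * gfun (s / μ)))
      = μ ^ (k + 1) / (k + 1) * Gf μ μ - 0 ^ (k + 1) / (k + 1) * Gf μ 0 := by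
    refine intervalIntegral.integral_eq_sub_of_hasDerivAt
      (f := fun s => s ^ (k + 1) / (k + 1) * Gf μ s) ?_ ?_
    · intro s _
      refine (((hasDerivAt_pow (k + 1) s).div_const ((k : ℝ) + 1)).mul (Gf_deriv μ s)).congr_deriv ?_
      push_cast
      field_simp
    · apply Continuous.intervalIntegrable
      fun_prop
  have s2 : ∫ s in (0:ℝ)..μ, (s ^ (k + 1) * gfun (s / μ) + s ^ (k + 2) / (k + 2) * -(Real.arccos (s / μ) / π / μ))
      = μ ^ (k + 2) / (k + 2) * gfun (μ / μ) - 0 ^ (k + 2) / (k + 2) * gfun (0 / μ) := by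
    refine intervalIntegral.integral_eq_sub_of_hasDerivAt_of_le hμ.le
      (f := fun s => s ^ (k + 2) / (k + 2) * gfun (s / μ)) (by fun_prop) ?_ ?_
    · intro s hs
      have hg0 := gfun_deriv (x := s / μ) (by have : 0 ≤ s / μ := div_nonneg hs.1.le hμ.le
                                              linarith) ((div_lt_one hμ).2 hs.2)
      have := HasDerivAt.comp s hg0 ((hasDerivAt_id s).div_const μ)
      refine (((hasDerivAt_pow (k + 2) s).div_const ((k : ℝ) + 2)).mul this).congr_deriv ?_
      push_cast
      simp
      field_simp
    · apply Continuous.intervalIntegrable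
      fun_prop
  have s3 : ∫ s in (0:ℝ)..μ, s ^ (k + 2) * Real.arccos (s / μ)
      = μ ^ (k + 3) * ∫ x in (0:ℝ)..1, x ^ (k + 2) * Real.arccos x := by
    have := intervalIntegral.integral_comp_div (a := 0) (b := μ) (c := μ)
      (fun x => x ^ (k + 2) * Real.arccos x) hμ.ne'
    rw [zero_div, div_self hμ.ne', smul_eq_mul] at this
    rw [show μ ^ (k + 3) = μ ^ (k + 2) * μ by ring, mul_assoc, ← this,
      ← intervalIntegral.integral_const_mul]
    congr 1; funext x
    rw [div_pow]
    field_simp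
  rw [intervalIntegral.integral_add (by apply Continuous.intervalIntegrable; fun_prop)
    (by apply Continuous.intervalIntegrable; fun_prop)] at s1 s2
  have e1 : ∫ s in (0:ℝ)..μ, s ^ (k + 1) / (k + 1) * -(μ * gfun (s / μ))
      = -(μ / (k + 1)) * ∫ s in (0:ℝ)..μ, s ^ (k + 1) * gfun (s / μ) := by
    rw [← intervalIntegral.integral_const_mul]
    congr 1; funext x; ring
  have e2 : ∫ s in (0:ℝ)..μ, s ^ (k + 2) / (k + 2) * -(Real.arccos (s / μ) / π / μ)
      = -(1 / ((k + 2) * π * μ)) * ∫ s in (0:ℝ)..μ, s ^ (k + 2) * Real.arccos (s / μ) := by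
    rw [← intervalIntegral.integral_const_mul]
    congr 1; funext x; field_simp
  have hG0 : Gf μ μ = 0 := by simp [Gf]
  rw [e1, hG0] at s1
  rw [e2, s3, int_arccos, Vn, div_self hμ.ne', gfun_one] at s2
  rw [intervalIntegral.integral_const_mul]
  simp only [mul_zero, ne_eq, Nat.succ_ne_zero, not_false_eq_true, zero_pow, zero_div, zero_mul,
    sub_zero] at s1 s2
  have s1' : ∫ s in (0:ℝ)..μ, s ^ k * Gf μ s = (μ / (k + 1)) * ∫ s in (0:ℝ)..μ, s ^ (k + 1) * gfun (s / μ) := by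
    linarith
  rw [s1', eq_neg_of_add_eq_zero_left s2]
  have hG : Real.Gamma (((k + 3 : ℕ) : ℝ) / 2 + 1) ≠ 0 := (Real.Gamma_pos_of_pos (by positivity)).ne'
  rw [show k + 2 + 1 = k + 3 by ring, Nat.factorial_succ, Nat.factorial_succ, Nat.factorial_succ]
  have hf : (k.factorial : ℝ) ≠ 0 := by positivity
  generalize Real.Gamma (((k + 3 : ℕ) : ℝ) / 2 + 1) = Y at *
  push_cast
  field_simp
  ring

lemma tsum_floor (x : ℝ) (hx : 0 ≤ x) (f : ℕ → ℝ) :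
    (∑' l : ℕ, if (l : ℝ) ≤ x then f l else 0) = ∑ l ∈ Finset.range (⌊x⌋₊ + 1), f l := by
  rw [tsum_eq_sum (s := Finset.range (⌊x⌋₊ + 1))]
  · refine Finset.sum_congr rfl fun l hl => ?_
    rw [if_pos]
    exact (Nat.le_floor_iff hx).1 (by have := Finset.mem_range.1 hl; omega)
  · intro l hl
    rw [if_neg]
    intro h
    have := (Nat.le_floor_iff hx).2 h
    exact hl (Finset.mem_range.2 (by omega))

/-- the weighted sum compared with the trapezoidal one -/
lemma sum_compare (k : ℕ) : ∃ C : ℝ, 0 ≤ C ∧ ∀ μ : ℝ, 2 ≤ μ → ∀ N : ℕ,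
    (k : ℝ) / 2 + N ≤ μ →
    |(∑ l ∈ Finset.range (N + 1), (multBdiff (k + 3) l : ℝ) * Gf μ ((k : ℝ) / 2 + l)) -
      ((∑ l ∈ Finset.range (N + 1), 2 / (k.factorial : ℝ) * (((k : ℝ) / 2 + l) ^ k * Gf μ ((k : ℝ) / 2 + l)))
        - 2 / (k.factorial : ℝ) * (((k : ℝ) / 2) ^ k * Gf μ ((k : ℝ) / 2)) / 2)| ≤ C * μ ^ (k + 1) := by
  rcases k with _ | m
  · refine ⟨0, le_rfl, fun μ hμ N hN => ?_⟩
    rw [Finset.sum_range_succ', Finset.sum_range_succ' (fun l : ℕ => 2 / (Nat.factorial 0 : ℝ) * _)]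
    simp only [zero_add, mult_zero]
    simp
    ring
  · set c : ℝ := 2 / ((m + 1).factorial : ℝ) with hc
    have hc0 : 0 ≤ c := by positivity
    have hD : 0 ≤ Dc m := Finset.sum_nonneg fun j _ => sq_nonneg _
    refine ⟨2 * (c * Dc m) + c * (((m + 1 : ℕ) : ℝ) / 2) ^ (m + 1), by positivity, fun μ hμ N hN => ?_⟩
    have hN0 : (0 : ℝ) ≤ N := by positivity
    have hμ0 : 0 < μ := by linarith
    set a : ℝ := ((m + 1 : ℕ) : ℝ) / 2 with ha
    have ha0 : 0 ≤ a := by positivity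
    have b1 : |∑ l ∈ Finset.range (N + 1), ((multBdiff (m + 1 + 3) l : ℝ) * Gf μ (a + l)
        - c * ((a + l) ^ (m + 1) * Gf μ (a + l)))| ≤ (N + 1) * (c * Dc m * μ ^ (m + 1)) := by
      refine (Finset.abs_sum_le_sum_abs _ _).trans ?_
      refine (Finset.sum_le_card_nsmul _ _ (c * Dc m * μ ^ (m + 1)) ?_).trans (by simp)
      intro l hl
      have hl : (l : ℝ) ≤ N := by
        have := Finset.mem_range.1 hl
        exact_mod_cast (by omega : l ≤ N)
      have h1 := mult_bound' m l (a + l) μ (by rw [ha]; push_cast; ring) (by linarith)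
      have h2 := Gf_bound' hμ0 (s := a + l) (by positivity) (by linarith)
      rw [show (multBdiff (m + 1 + 3) l : ℝ) * Gf μ (a + l) - c * ((a + l) ^ (m + 1) * Gf μ (a + l))
        = ((multBdiff (m + 4) l : ℝ) - c * (a + l) ^ (m + 1)) * Gf μ (a + l) by ring, abs_mul]
      refine le_trans ?_ h1
      gcongr
    rw [Finset.sum_sub_distrib] at b1
    have b2 : |c * (a ^ (m + 1) * Gf μ a) / 2| ≤ c * a ^ (m + 1) * μ ^ (m + 1 + 1) := by
      have h2 := Gf_bound' hμ0 (s := a) (by positivity) (by linarith)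
      have h3 : μ ^ 2 ≤ μ ^ (m + 1 + 1) := pow_le_pow_right₀ (by linarith) (by omega)
      rw [show c * (a ^ (m + 1) * Gf μ a) / 2 = (c * a ^ (m + 1) / 2) * Gf μ a by ring, abs_mul,
        abs_of_nonneg (by positivity)]
      have h4 : 0 ≤ c * a ^ (m + 1) := by positivity
      calc _ ≤ c * a ^ (m + 1) * μ ^ (m + 1 + 1) := by
            apply mul_le_mul (by linarith) (h2.trans h3) (abs_nonneg _) h4
        _ = _ := by ring
    have b3 : ((N : ℝ) + 1) * (c * Dc m * μ ^ (m + 1)) ≤ 2 * (c * Dc m) * μ ^ (m + 1 + 1) := by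
      calc _ ≤ (2 * μ) * (c * Dc m * μ ^ (m + 1)) := by gcongr; linarith
        _ = _ := by ring
    rw [abs_le] at *
    constructor <;> linarith [b1.1, b1.2, b2.1, b2.2]

/-- the weighted sum of areas gives the main Weyl term up to `O(μ^{d-2})`. -/
theorem weighted_area_sum_asymptotics (d : ℕ) (hd : 3 ≤ d) :
    ∃ C : ℝ, 0 < C ∧ ∀ μ : ℝ, 2 ≤ μ →
      |(∑' l : ℕ, if (l : ℝ) ≤ μ - ((d : ℝ) - 2) / 2 then
            (multBdiff d l : ℝ) * ∫ t in ((l : ℝ) + ((d : ℝ) - 3) / 2)..μ, μ * gfun (t / μ)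
          else 0) -
          μ ^ d / (2 ^ d * Real.Gamma ((d : ℝ) / 2 + 1) ^ 2)| ≤ C * μ ^ (d - 2) := by
  obtain ⟨k, rfl⟩ : ∃ k, d = k + 3 := ⟨d - 3, by omega⟩
  obtain ⟨C1, hC1, hS⟩ := sum_compare k
  set c : ℝ := 2 / (k.factorial : ℝ) with hc
  have hc0 : 0 ≤ c := by positivity
  set a : ℝ := (k : ℝ) / 2 with ha
  have ha0 : 0 ≤ a := by positivity
  set K : ℝ := 1 / (2 ^ (k + 3) * Real.Gamma (((k + 3 : ℕ) : ℝ) / 2 + 1) ^ 2) with hK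
  have hK0 : 0 ≤ K := by positivity
  refine ⟨C1 + c * ((k : ℝ) ^ 2 + 2 * k + 1) + c * 8 + c * a ^ k * a + K * (k + 1) ^ 2 + 1,
    by positivity, fun μ hμ => ?_⟩
  have hμ0 : 0 < μ := by linarith
  have hpow : 0 ≤ μ ^ (k + 1) := by positivity
  have hpk : μ ^ k ≤ μ ^ (k + 1) := pow_le_pow_right₀ (by linarith) (by omega)
  have hpk0 : 0 ≤ μ ^ k := by positivity
  have p1 : 0 ≤ C1 * μ ^ (k + 1) := by positivity
  have p2 : 0 ≤ c * ((k : ℝ) ^ 2 + 2 * k + 1) * μ ^ (k + 1) := by positivity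
  have p3 : 0 ≤ c * 8 * μ ^ (k + 1) := by positivity
  have p4 : 0 ≤ c * a ^ k * a * μ ^ (k + 1) := by positivity
  have p5 : 0 ≤ K * (k + 1) ^ 2 * μ ^ (k + 1) := by positivity
  rw [show k + 3 - 2 = k + 1 by omega]
  have hx : μ - (((k + 3 : ℕ) : ℝ) - 2) / 2 = μ - a - 1 / 2 := by rw [ha]; push_cast; ring
  have hy : ∀ l : ℕ, (l : ℝ) + (((k + 3 : ℕ) : ℝ) - 3) / 2 = a + l := by
    intro l; rw [ha]; push_cast; ring
  simp_rw [hx, hy]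
  change |(∑' l : ℕ, if (l : ℝ) ≤ μ - a - 1 / 2 then (multBdiff (k + 3) l : ℝ) * Gf μ (a + l) else 0) - _| ≤ _
  by_cases hcase : 0 ≤ μ - a - 1 / 2
  · rw [tsum_floor _ hcase]
    set N := ⌊μ - a - 1 / 2⌋₊ with hN
    have hN1 : (N : ℝ) ≤ μ - a - 1 / 2 := Nat.floor_le hcase
    have hN2 : μ - a - 1 / 2 < N + 1 := Nat.lt_floor_add_one _
    have hN0 : (0 : ℝ) ≤ N := by positivity
    have q1 := hS μ hμ N (by linarith)
    obtain ⟨F1, F2, hF2, d1, d2, d3⟩ := F_derivs k hμ0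
    have hFc : Continuous fun s => c * (s ^ k * Gf μ s) := by
      have := Gf_cont μ
      fun_prop
    have q2 := trap_sum (F := fun s => c * (s ^ k * Gf μ s)) (F1 := fun s => c * F1 s)
      (F2 := fun s => c * F2 s) (a := a) (b := μ) (M := c * (((k : ℝ) ^ 2 + 2 * k + 1) * μ ^ k))
      (by fun_prop) (fun s => (d1 s).const_mul c)
      (fun s h0 h1 => (d2 s (by linarith) h1).const_mul c)
      (fun s h0 h1 => by
        rw [abs_mul, abs_of_nonneg hc0]
        exact mul_le_mul_of_nonneg_left (d3 s (by linarith) h1) hc0) N (by linarith)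
    have q2' : (N : ℝ) * (c * (((k : ℝ) ^ 2 + 2 * k + 1) * μ ^ k))
        ≤ c * ((k : ℝ) ^ 2 + 2 * k + 1) * μ ^ (k + 1) := by
      calc _ ≤ μ * (c * (((k : ℝ) ^ 2 + 2 * k + 1) * μ ^ k)) := by gcongr; linarith
        _ = _ := by ring
    -- near the right end
    have hend : ∀ s, a + N ≤ s → s ≤ μ → |c * (s ^ k * Gf μ s)| ≤ c * (9 / 4) * μ ^ k := by
      intro s h0 h1
      have h2 := Gf_bound hμ0 (s := s) (by linarith) h1
      have h3 : |Gf μ s| ≤ 9 / 4 := h2.trans (by nlinarith)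
      have h4 : 0 ≤ s := by linarith
      rw [abs_mul, abs_mul, abs_of_nonneg hc0, abs_of_nonneg (a := s ^ k) (by positivity)]
      calc _ ≤ c * (μ ^ k * (9 / 4)) := by gcongr
        _ = _ := by ring
    have q3 := hend (a + N) le_rfl (by linarith)
    have q4 := intervalIntegral.norm_integral_le_of_norm_le_const (a := a + N) (b := μ)
      (C := c * (9 / 4) * μ ^ k) (f := fun s => c * (s ^ k * Gf μ s)) (fun s hs => by
        rw [uIoc_of_le (by linarith)] at hs
        exact hend s hs.1.le hs.2)
    have q4' : c * (9 / 4) * μ ^ k * |μ - (a + N)| ≤ c * (9 / 4) * μ ^ k * (3 / 2) := by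
      rw [abs_of_nonneg (by linarith)]
      gcongr
      linarith
    have q5 := intervalIntegral.norm_integral_le_of_norm_le_const (a := 0) (b := a)
      (C := c * a ^ k * μ ^ 2) (f := fun s => c * (s ^ k * Gf μ s)) (fun s hs => by
        rw [uIoc_of_le ha0] at hs
        have h4 : 0 ≤ s := hs.1.le
        have h2 := Gf_bound' hμ0 (s := s) h4 (by linarith [hs.2])
        rw [Real.norm_eq_abs, abs_mul, abs_mul, abs_of_nonneg hc0,
          abs_of_nonneg (a := s ^ k) (by positivity)]
        calc _ ≤ c * (a ^ k * μ ^ 2) := by gcongr; exact hs.2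
          _ = _ := by ring)
    rw [sub_zero, abs_of_nonneg ha0] at q5
    have q5' : c * a ^ k * μ ^ 2 * a ≤ c * a ^ k * a * μ ^ (k + 1) := by
      rcases Nat.eq_zero_or_pos k with h | h
      · simp [ha, h]
      · have : μ ^ 2 ≤ μ ^ (k + 1) := pow_le_pow_right₀ (by linarith) (by omega)
        calc _ = c * a ^ k * a * μ ^ 2 := by ring
          _ ≤ _ := by gcongr
    have q6 := main_int k hμ0
    rw [← intervalIntegral.integral_add_adjacent_intervals
      (hFc.intervalIntegrable 0 a (μ := volume)) (hFc.intervalIntegrable a μ),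
      ← intervalIntegral.integral_add_adjacent_intervals
      (hFc.intervalIntegrable a (a + N) (μ := volume)) (hFc.intervalIntegrable (a + N) μ)] at q6
    rw [← q6]
    have r1 : c * μ ^ k ≤ c * μ ^ (k + 1) := by gcongr
    have r0 : 0 ≤ c * μ ^ k := by positivity
    simp only [Real.norm_eq_abs] at q4 q5
    rw [abs_le] at *
    constructor <;> linarith [q1.1, q1.2, q2.1, q2.2, q3.1, q3.2, q4.1, q4.2, q5.1, q5.2]
  · have hz : (∑' l : ℕ, if (l : ℝ) ≤ μ - a - 1 / 2 then (multBdiff (k + 3) l : ℝ) * Gf μ (a + l) else 0) = 0 := by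
      rw [tsum_congr (g := fun _ => (0 : ℝ)) ?_, tsum_zero]
      intro l
      rw [if_neg]
      rw [not_le] at hcase ⊢
      have : (0 : ℝ) ≤ l := by positivity
      linarith
    rw [hz, zero_sub, abs_neg, div_eq_mul_one_div, ← hK, abs_of_nonneg (by positivity)]
    have hμk : μ ≤ k + 1 := by rw [ha] at hcase; linarith [(by positivity : (0 : ℝ) ≤ k)]
    have : μ ^ (k + 3) * K ≤ K * (k + 1) ^ 2 * μ ^ (k + 1) := by
      calc _ = K * μ ^ 2 * μ ^ (k + 1) := by ring
        _ ≤ _ := by gcongr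
    linarith
end

section
/- Let d ≥ 3 be an integer. There exists a constant C > 0 such that for all μ ≥ 2, | (1/4) Σ_{0 ≤ l ≤ μ−(d−2)/2} (m_l^d − m_{l−1}^d) · (μ − l − (d−3)/2) − μ^{d−1}/(2·(d−1)!) | ≤ C μ^{d−2}, where the sum is over integers l. -/
open Real Set

lemma descF_asymp (K : ℝ) (hK : 0 ≤ K) (n : ℕ) : ∃ C : ℝ, 0 ≤ C ∧ ∀ μ : ℝ, 1 ≤ μ → ∀ N : ℕ,
    |(N : ℝ) - μ| ≤ K → μ * |(N.descFactorial n : ℝ) - μ ^ n| ≤ C * μ ^ n := by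
  induction n with
  | zero => exact ⟨0, le_rfl, fun μ _ N _ => by simp⟩
  | succ n ih =>
    obtain ⟨C, hC, h⟩ := ih
    refine ⟨(1 + C) * (K + n) + C, by positivity, fun μ hμ N hN => ?_⟩
    have h1 := h μ hμ N hN
    have e : ((N.descFactorial (n + 1) : ℕ) : ℝ) = ((N : ℝ) - n) * (N.descFactorial n : ℝ) := by
      rw [Nat.descFactorial_succ]
      rcases le_or_gt n N with hn | hn
      · push_cast [Nat.cast_sub hn]; ring
      · simp [Nat.descFactorial_of_lt hn]
    rw [e]
    set P : ℝ := (N.descFactorial n : ℝ) with hP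
    have hP0 : 0 ≤ P := by positivity
    have hμ0 : 0 < μ := by linarith
    have hpow : 0 < μ ^ n := by positivity
    have hb : |P - μ ^ n| ≤ C * μ ^ n := by
      have : 1 * |P - μ ^ n| ≤ μ * |P - μ ^ n| :=
        mul_le_mul_of_nonneg_right hμ (abs_nonneg _)
      linarith
    have hPb : P ≤ (1 + C) * μ ^ n := by
      have := (abs_le.mp hb).2
      linarith
    have hx : |(N : ℝ) - n - μ| ≤ K + n := by
      rw [abs_le] at hN ⊢
      have : (0 : ℝ) ≤ n := by positivity
      constructor <;> linarith [hN.1, hN.2]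
    have e2 : ((N : ℝ) - n) * P - μ ^ (n + 1) = ((N : ℝ) - n - μ) * P + μ * (P - μ ^ n) := by ring
    have h2 : |((N : ℝ) - n) * P - μ ^ (n + 1)| ≤ (K + n) * ((1 + C) * μ ^ n) + C * μ ^ n := by
      rw [e2]
      refine (abs_add_le _ _).trans ?_
      rw [abs_mul, abs_mul, abs_of_nonneg hP0, abs_of_pos hμ0]
      have : |(N : ℝ) - n - μ| * P ≤ (K + n) * ((1 + C) * μ ^ n) :=
        mul_le_mul hx hPb hP0 (by positivity)
      linarith
    calc μ * |((N : ℝ) - n) * P - μ ^ (n + 1)|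
        ≤ μ * ((K + n) * ((1 + C) * μ ^ n) + C * μ ^ n) :=
          mul_le_mul_of_nonneg_left h2 hμ0.le
      _ = _ := by ring

lemma choose_asymp (K : ℝ) (hK : 0 ≤ K) (n : ℕ) : ∃ C : ℝ, 0 ≤ C ∧ ∀ μ : ℝ, 1 ≤ μ → ∀ N : ℕ,
    |(N : ℝ) - μ| ≤ K →
    |(N.choose (n + 1) : ℝ) - μ ^ (n + 1) / ((n + 1).factorial : ℝ)| ≤ C * μ ^ n := by
  obtain ⟨C, hC, h⟩ := descF_asymp K hK (n + 1)
  refine ⟨C, hC, fun μ hμ N hN => ?_⟩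
  have h1 := h μ hμ N hN
  have hμ0 : 0 < μ := by linarith
  have hF : (1 : ℝ) ≤ ((n + 1).factorial : ℝ) := by
    exact_mod_cast Nat.factorial_pos (n + 1)
  have e : ((N.descFactorial (n + 1) : ℕ) : ℝ)
      = ((n + 1).factorial : ℝ) * (N.choose (n + 1) : ℝ) := by
    rw [Nat.descFactorial_eq_factorial_mul_choose]; push_cast; ring
  have h2 : |((N.descFactorial (n + 1) : ℕ) : ℝ) - μ ^ (n + 1)| ≤ C * μ ^ n := by
    refine le_of_mul_le_mul_left (h1.trans_eq ?_) hμ0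
    ring
  have e3 : ((N.descFactorial (n + 1) : ℕ) : ℝ) - μ ^ (n + 1) = ((n + 1).factorial : ℝ) *
      ((N.choose (n + 1) : ℝ) - μ ^ (n + 1) / ((n + 1).factorial : ℝ)) := by
    rw [e]; field_simp
  rw [e3, abs_mul, abs_of_pos (by linarith)] at h2
  nlinarith [abs_nonneg ((N.choose (n + 1) : ℝ) - μ ^ (n + 1) / ((n + 1).factorial : ℝ))]

lemma multB_cast (e n : ℕ) : (multB (e + 3) n : ℝ) =
    ((n + e + 2).choose (e + 2) : ℝ) - ((n + e).choose (e + 2) : ℝ) := by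
  have : multB (e + 3) n = (n + e + 2).choose (e + 2) - (n + e).choose (e + 2) := rfl
  rw [this, Nat.cast_sub (Nat.choose_le_choose _ (by omega))]

lemma sum_eq (e : ℕ) (A : ℝ) (L : ℕ) :
    ∑ l ∈ Finset.range (L + 1), (multBdiff (e + 3) l : ℝ) * (A - l) =
      (multB (e + 3) L : ℝ) * (A - L - 1) + ((L + e + 2).choose (e + 2) : ℝ)
        + ((L + e + 1).choose (e + 2) : ℝ) := by
  induction L with
  | zero =>
    have := multB_cast e 0
    have h1 : (0 + e).choose (e + 2) = 0 := Nat.choose_eq_zero_of_lt (by omega)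
    have h2 : (0 + e + 1).choose (e + 2) = 0 := Nat.choose_eq_zero_of_lt (by omega)
    have h3 : (0 + e + 2).choose (e + 2) = 1 := by simp
    rw [h1, h3] at this
    rw [h2, h3]
    simp [multBdiff, this]
  | succ L ih =>
    rw [Finset.sum_range_succ, ih]
    have hm := multB_cast e (L + 1)
    have hdf : (multBdiff (e + 3) (L + 1) : ℝ)
        = (multB (e + 3) (L + 1) : ℝ) - (multB (e + 3) L : ℝ) := by
      simp [multBdiff]
    rw [hdf]
    rw [show L + 1 + e + 2 = L + e + 3 by ring, show L + 1 + e = L + e + 1 by ring] at *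
    push_cast
    rw [show L + e + 1 + 1 = L + e + 2 by ring]
    linear_combination hm

/-- the weighted sum of the boundary-correction terms gives the second Weyl term
up to `O(μ^{d-2})`. -/
theorem weighted_boundary_sum_asymptotics (d : ℕ) (hd : 3 ≤ d) :
    ∃ C : ℝ, 0 < C ∧ ∀ μ : ℝ, 2 ≤ μ →
      |(1 / 4) * (∑' l : ℕ, if (l : ℝ) ≤ μ - ((d : ℝ) - 2) / 2 then
            (multBdiff d l : ℝ) * (μ - (l : ℝ) - ((d : ℝ) - 3) / 2)
          else 0) -
          μ ^ (d - 1) / (2 * (Nat.factorial (d - 1) : ℝ))| ≤ C * μ ^ (d - 2) := by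
  obtain ⟨e, rfl⟩ : ∃ e, d = e + 3 := ⟨d - 3, by omega⟩
  obtain ⟨C, hC, h⟩ := choose_asymp (e + 3) (by positivity) (e + 1)
  refine ⟨C + e + 3, by positivity, fun μ hμ => ?_⟩
  rw [show e + 3 - 1 = e + 2 by omega, show e + 3 - 2 = e + 1 by omega]
  have he : (0 : ℝ) ≤ e := by positivity
  have hX : 0 < μ ^ (e + 1) := by positivity
  have hF : (1 : ℝ) ≤ ((e + 2).factorial : ℝ) := by
    exact_mod_cast Nat.factorial_pos (e + 2)
  push_cast
  rcases lt_or_ge (μ - ((e : ℝ) + 3 - 2) / 2) 0 with hneg | hpos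
  · have hz : ∀ l : ℕ, ¬ ((l : ℝ) ≤ μ - ((e : ℝ) + 3 - 2) / 2) := fun l hl => by
      have : (0 : ℝ) ≤ l := by positivity
      linarith
    simp only [hz, if_false, tsum_zero, mul_zero, zero_sub, abs_neg]
    rw [abs_of_nonneg (by positivity)]
    calc μ ^ (e + 2) / (2 * ((e + 2).factorial : ℝ)) ≤ μ ^ (e + 2) :=
          div_le_self (by positivity) (by linarith)
      _ = μ * μ ^ (e + 1) := by ring
      _ ≤ _ := mul_le_mul_of_nonneg_right (by linarith) hX.le
  · set L := ⌊μ - ((e : ℝ) + 3 - 2) / 2⌋₊ with hL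
    have hL1 : (L : ℝ) ≤ μ - ((e : ℝ) + 3 - 2) / 2 := Nat.floor_le hpos
    have hL2 : μ - ((e : ℝ) + 3 - 2) / 2 < L + 1 := Nat.lt_floor_add_one _
    have hs : (∑' l : ℕ, if (l : ℝ) ≤ μ - ((e : ℝ) + 3 - 2) / 2 then
            (multBdiff (e + 3) l : ℝ) * (μ - (l : ℝ) - ((e : ℝ) + 3 - 3) / 2)
          else 0) = ∑ l ∈ Finset.range (L + 1),
            (multBdiff (e + 3) l : ℝ) * ((μ - (e : ℝ) / 2) - l) := by
      rw [tsum_eq_sum (s := Finset.range (L + 1))]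
      · refine Finset.sum_congr rfl fun l hl => ?_
        have hl' : l ≤ L := by simpa [Nat.lt_succ_iff] using hl
        have : (l : ℝ) ≤ L := by exact_mod_cast hl'
        rw [if_pos (by linarith)]
        ring
      · intro l hl
        have hl' : L + 1 ≤ l := by simpa using hl
        have : (L : ℝ) + 1 ≤ l := by exact_mod_cast hl'
        rw [if_neg (by linarith)]
    rw [hs, sum_eq, multB_cast]
    have b2 := h μ (by linarith) (L + e + 2) (by
      push_cast; rw [abs_le]; constructor <;> linarith)
    have b1 := h μ (by linarith) (L + e + 1) (by
      push_cast; rw [abs_le]; constructor <;> linarith)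
    have b0 := h μ (by linarith) (L + e) (by
      push_cast; rw [abs_le]; constructor <;> linarith)
    rw [show e + 1 + 1 = e + 2 by ring] at b0 b1 b2
    rw [show μ ^ (e + 2) / (2 * ((e + 2).factorial : ℝ))
      = (1 / 2) * (μ ^ (e + 2) / ((e + 2).factorial : ℝ)) by field_simp]
    generalize μ ^ (e + 2) / ((e + 2).factorial : ℝ) = P at *
    generalize ((L + e + 2).choose (e + 2) : ℝ) = B2 at *
    generalize ((L + e + 1).choose (e + 2) : ℝ) = B1 at *
    generalize ((L + e).choose (e + 2) : ℝ) = B0 at *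
    have ht : |μ - (e : ℝ) / 2 - L - 1| ≤ 1 := by
      rw [abs_le]; constructor <;> linarith
    generalize μ - (e : ℝ) / 2 - L - 1 = t at *
    have hd : |B2 - B0| ≤ 2 * (C * μ ^ (e + 1)) := by
      rw [abs_le] at *; constructor <;> linarith [b0.1, b0.2, b2.1, b2.2]
    have hm : |(B2 - B0) * t| ≤ 2 * (C * μ ^ (e + 1)) := by
      rw [abs_mul]
      calc _ ≤ |B2 - B0| * 1 := mul_le_mul_of_nonneg_left ht (abs_nonneg _)
        _ ≤ _ := by linarith
    have hfin : |1 / 4 * ((B2 - B0) * t + B2 + B1) - 1 / 2 * P| ≤ C * μ ^ (e + 1) := by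
      rw [abs_le] at *
      constructor <;> linarith [b1.1, b1.2, b2.1, b2.2, hm.1, hm.2]
    have : 0 ≤ (e + 3 : ℝ) * μ ^ (e + 1) := by positivity
    linarith
end
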